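/- arXiv:1202.3225 — 2 statements merged into one kernel-verified Lean document; each statement's English description precedes it below -/
import Mathlib

section
/- Under the inductive Gevrey bounds on h, there is a constant c₁ ≥ 1 depending only on s and on finitely many low-order Hölder norms of h (e.g. ‖h‖₄ and ‖h_q‖_{2,μ}), but not on m, n, L₁, L₂, such that for α = (α₁,α₂) = (m−n, n): Σ_{γ≤α, γ≠0} C(α,γ) ‖∂^γ(h_q²)‖₀ ‖∂^{α−γ} h_{pp}‖₀ ≤ c₁ L₁^{α₁−2} L₂^{α₂} [(|α|−2)!]^s, where C(α,γ) = α!/(γ!(α−γ)!) and the sum is over multi-indices γ ≤ α with γ ≠ 0. -/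
open Set

noncomputable section

/-- The closed strip `R̄ = ℝ × [p₀, 0]`. -/
def Strip (p₀ : ℝ) : Set (ℝ × ℝ) := {z : ℝ × ℝ | p₀ ≤ z.2 ∧ z.2 ≤ 0}

/-- The mixed partial derivative `∂_q^a ∂_p^b f` of `f : ℝ² → ℝ` within the set `S`,
realized as the iterated Fréchet derivative within `S` applied to the corresponding
coordinate directions. -/
def mpw (S : Set (ℝ × ℝ)) (a b : ℕ) (f : ℝ × ℝ → ℝ) (z : ℝ × ℝ) : ℝ :=
  iteratedFDerivWithin ℝ (a + b) f S z
    (fun i => if (i : ℕ) < a then ((1 : ℝ), (0 : ℝ)) else ((0 : ℝ), (1 : ℝ)))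

/-- `∂_q^a ∂_p^b f` within the strip `R̄`. -/
def pd (p₀ : ℝ) (a b : ℕ) (f : ℝ × ℝ → ℝ) : ℝ × ℝ → ℝ := mpw (Strip p₀) a b f

/-- Euclidean distance on `ℝ²`. -/
def edist2 (z z' : ℝ × ℝ) : ℝ := Real.sqrt ((z.1 - z'.1) ^ 2 + (z.2 - z'.2) ^ 2)

/-- `sup_{R̄} |f|`. -/
def supS (p₀ : ℝ) (f : ℝ × ℝ → ℝ) : ℝ := sSup ((fun z => |f z|) '' Strip p₀)

/-- The Hölder seminorm of exponent `μ` of `f` over the strip `R̄`. -/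
def hsemi (p₀ μ : ℝ) (f : ℝ × ℝ → ℝ) : ℝ :=
  sSup {y | ∃ z ∈ Strip p₀, ∃ z' ∈ Strip p₀, z ≠ z' ∧ y = |f z - f z'| / (edist2 z z') ^ μ}

/-- The `C^k` sup-norm `‖f‖_k = Σ_{|α| ≤ k} sup_{R̄} |∂^α f|`. -/
def cknorm (p₀ : ℝ) (k : ℕ) (f : ℝ × ℝ → ℝ) : ℝ :=
  ∑ a ∈ Finset.range (k + 1), ∑ b ∈ Finset.range (k + 1 - a), supS p₀ (pd p₀ a b f)

/-- The Hölder norm `‖f‖_{k,μ} = ‖f‖_k + max_{|α| = k} [∂^α f]_μ`. -/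
def hnorm (p₀ μ : ℝ) (k : ℕ) (f : ℝ × ℝ → ℝ) : ℝ :=
  cknorm p₀ k f + sSup {y | ∃ a b : ℕ, a + b = k ∧ y = hsemi p₀ μ (pd p₀ a b f)}

/-- Boundedness of `f` on the strip (finiteness of `sup_{R̄} |f|`). -/
def bddS (p₀ : ℝ) (f : ℝ × ℝ → ℝ) : Prop := BddAbove ((fun z => |f z|) '' Strip p₀)

/-- Finiteness of the Hölder seminorm of `f` on the strip. -/
def bddH (p₀ μ : ℝ) (f : ℝ × ℝ → ℝ) : Prop :=
  BddAbove {y | ∃ z ∈ Strip p₀, ∃ z' ∈ Strip p₀, z ≠ z' ∧ y = |f z - f z'| / (edist2 z z') ^ μ}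

/-- Finiteness of the `C^{k,μ}(R̄)` norm. -/
def finCk (p₀ μ : ℝ) (k : ℕ) (f : ℝ × ℝ → ℝ) : Prop :=
  (∀ a b : ℕ, a + b ≤ k → bddS p₀ (pd p₀ a b f)) ∧
  (∀ a b : ℕ, a + b = k → bddH p₀ μ (pd p₀ a b f))

/-- Membership in `C^{k,μ}(R̄)`: `k` times continuously differentiable on the strip with
bounded derivatives, the top-order ones Hölder continuous of exponent `μ`. -/
def MemCk (p₀ μ : ℝ) (k : ℕ) (f : ℝ × ℝ → ℝ) : Prop :=
  ContDiffOn ℝ k f (Strip p₀) ∧ finCk p₀ μ k f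

/-- The inductive Gevrey bounds on `h`:
(i) `‖∂^γ h‖₂ ≤ L₁^{γ₁−1} L₂^{γ₂} [(|γ|−2)!]^s` for `2 ≤ |γ| ≤ m−1`;
(ii) `‖∂_q^{m−i}∂_p^i h‖₂ ≤ L₁^{m−i−1} L₂^i [(m−2)!]^s` for `0 ≤ i ≤ n−1`. -/
def IndBounds (p₀ s L₁ L₂ : ℝ) (m n : ℕ) (h : ℝ × ℝ → ℝ) : Prop :=
  (∀ g1 g2 : ℕ, 2 ≤ g1 + g2 → g1 + g2 ≤ m - 1 →
    cknorm p₀ 2 (pd p₀ g1 g2 h) ≤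
      L₁ ^ ((g1 : ℤ) - 1) * L₂ ^ g2 * (Nat.factorial (g1 + g2 - 2) : ℝ) ^ s) ∧
  (∀ i : ℕ, i < n →
    cknorm p₀ 2 (pd p₀ (m - i) i h) ≤
      L₁ ^ ((m : ℤ) - (i : ℤ) - 1) * L₂ ^ i * (Nat.factorial (m - 2) : ℝ) ^ s)

namespace LS

lemma strip_convex (p₀ : ℝ) : Convex ℝ (Strip p₀) := by
  have : Strip p₀ = (LinearMap.snd ℝ ℝ ℝ) ⁻¹' (Set.Icc p₀ 0) := by
    ext z; simp [Strip]
  rw [this]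
  exact (convex_Icc p₀ 0).linear_preimage _

lemma strip_int (p₀ : ℝ) (hp : p₀ < 0) : (interior (Strip p₀)).Nonempty := by
  refine ⟨(0, p₀ / 2), ?_⟩
  rw [mem_interior]
  refine ⟨{z : ℝ × ℝ | p₀ < z.2 ∧ z.2 < 0}, fun z hz => ⟨hz.1.le, hz.2.le⟩, ?_, ?_⟩
  · exact (isOpen_lt continuous_const continuous_snd).inter (isOpen_lt continuous_snd continuous_const)
  · constructor <;> simp <;> linarith

lemma strip_unique (p₀ : ℝ) (hp : p₀ < 0) : UniqueDiffOn ℝ (Strip p₀) :=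
  uniqueDiffOn_convex (strip_convex p₀) (strip_int p₀ hp)

lemma strip_closure (p₀ : ℝ) (hp : p₀ < 0) {z : ℝ × ℝ} (hz : z ∈ Strip p₀) :
    z ∈ closure (interior (Strip p₀)) := by
  rw [(strip_convex p₀).closure_interior_eq_closure_of_nonempty_interior (strip_int p₀ hp)]
  exact subset_closure hz

/-- Smooth functions on `S`. -/
def Sm (S : Set (ℝ × ℝ)) : Subalgebra ℝ (ℝ × ℝ → ℝ) where
  carrier := {f | ContDiffOn ℝ (⊤ : ℕ∞) f S}
  mul_mem' := fun hf hg => ContDiffOn.mul hf hg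
  add_mem' := fun hf hg => ContDiffOn.add hf hg
  algebraMap_mem' := fun _ => contDiffOn_const

lemma sm_diff {S : Set (ℝ × ℝ)} (f : Sm S) {z : ℝ × ℝ} (hz : z ∈ S) :
    DifferentiableWithinAt ℝ (f : ℝ × ℝ → ℝ) S z :=
  (ContDiffOn.differentiableOn (f.2 : ContDiffOn ℝ (⊤ : ℕ∞) _ S) (by simp)) z hz

lemma sm_fderiv {S : Set (ℝ × ℝ)} (hS : UniqueDiffOn ℝ S) (f : Sm S) :
    ContDiffOn ℝ (⊤ : ℕ∞) (fderivWithin ℝ (f : ℝ × ℝ → ℝ) S) S :=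
  ContDiffOn.fderivWithin (f.2 : ContDiffOn ℝ (⊤ : ℕ∞) _ S) hS (by norm_cast)

/-- Directional derivative as an endomorphism. -/
def D {S : Set (ℝ × ℝ)} (hS : UniqueDiffOn ℝ S) (v : ℝ × ℝ) : Module.End ℝ (Sm S) where
  toFun f := ⟨S.indicator (fun z => fderivWithin ℝ (f : ℝ × ℝ → ℝ) S z v), by
    have h1 : ContDiffOn ℝ (⊤ : ℕ∞) (fun z => fderivWithin ℝ (f : ℝ × ℝ → ℝ) S z v) S :=
      (sm_fderiv hS f).clm_apply contDiffOn_const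
    exact h1.congr (fun z hz => by simp [hz])⟩
  map_add' f g := by
    ext z
    by_cases hz : z ∈ S
    · simp [hz, fderivWithin_add (hS z hz) (sm_diff f hz) (sm_diff g hz)]
    · simp [hz]
  map_smul' c f := by
    ext z
    by_cases hz : z ∈ S
    · simp [hz, fderivWithin_const_smul (hS z hz) (sm_diff f hz) c]
    · simp [hz]

lemma D_apply {S : Set (ℝ × ℝ)} (hS : UniqueDiffOn ℝ S) (v : ℝ × ℝ) (f : Sm S) {z : ℝ × ℝ}
    (hz : z ∈ S) : (D hS v f : ℝ × ℝ → ℝ) z = fderivWithin ℝ (f : ℝ × ℝ → ℝ) S z v := by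
  simp [D, hz]

lemma D_apply_not {S : Set (ℝ × ℝ)} (hS : UniqueDiffOn ℝ S) (v : ℝ × ℝ) (f : Sm S) {z : ℝ × ℝ}
    (hz : z ∉ S) : (D hS v f : ℝ × ℝ → ℝ) z = 0 := by
  simp [D, hz]

lemma D_mul {S : Set (ℝ × ℝ)} (hS : UniqueDiffOn ℝ S) (v : ℝ × ℝ) (f g : Sm S) :
    D hS v (f * g) = D hS v f * g + f * D hS v g := by
  ext z
  by_cases hz : z ∈ S
  · have := fderivWithin_mul (hS z hz) (sm_diff f hz) (sm_diff g hz)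
    simp only [AddMemClass.coe_add, MulMemClass.coe_mul, Pi.add_apply, Pi.mul_apply, D_apply hS v _ hz, this]
    simp
    ring
  · simp [D_apply_not hS v _ hz]

lemma D_comm {S : Set (ℝ × ℝ)} (hS : UniqueDiffOn ℝ S) (hc : ∀ z ∈ S, z ∈ closure (interior S))
    (v w : ℝ × ℝ) : Commute (D hS v) (D hS w) := by
  have key : ∀ (v w : ℝ × ℝ) (f : Sm S) (z : ℝ × ℝ), z ∈ S → (D hS v (D hS w f) : ℝ × ℝ → ℝ) z
      = fderivWithin ℝ (fderivWithin ℝ (f : ℝ × ℝ → ℝ) S) S z v w := by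
    intro v w f z hz
    rw [D_apply hS v _ hz]
    have h1 : fderivWithin ℝ (D hS w f : ℝ × ℝ → ℝ) S z
        = fderivWithin ℝ (fun y => fderivWithin ℝ (f : ℝ × ℝ → ℝ) S y w) S z :=
      fderivWithin_congr (fun y hy => D_apply hS w f hy) (D_apply hS w f hz)
    rw [h1, fderivWithin_clm_apply (hS z hz)
      ((sm_fderiv hS f).differentiableOn (by simp) z hz) (differentiableWithinAt_const _)]
    simp
  refine LinearMap.ext fun f => ?_
  ext z
  simp only [Module.End.mul_apply]
  by_cases hz : z ∈ S
  · rw [key v w f z hz, key w v f z hz]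
    have h2 : ContDiffWithinAt ℝ (⊤ : ℕ∞) (f : ℝ × ℝ → ℝ) S z := f.2 z hz
    exact (h2.isSymmSndFDerivWithinAt (by simp; norm_cast) hS (hc z hz) hz) v w
  · simp [D_apply_not hS _ _ hz]

lemma D_leib {S : Set (ℝ × ℝ)} (hS : UniqueDiffOn ℝ S) (v : ℝ × ℝ) (n : ℕ) : ∀ (f g : Sm S),
    (D hS v ^ n) (f * g) = ∑ k ∈ Finset.range (n + 1),
      (n.choose k : Sm S) * ((D hS v ^ k) f * (D hS v ^ (n - k)) g) := by
  induction n with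
  | zero => intro f g; simp
  | succ n ih =>
    intro f g
    rw [pow_succ, Module.End.mul_apply, D_mul, map_add, ih, ih,
      Finset.sum_choose_succ_mul (fun i j => (D hS v ^ i) f * (D hS v ^ j) g), add_comm]
    congr 1
    apply Finset.sum_congr rfl
    intro i hi
    have : n + 1 - i = (n - i) + 1 := by
      have := Finset.mem_range.1 hi; omega
    rw [this, pow_succ, Module.End.mul_apply]

lemma iter_step {S : Set (ℝ × ℝ)} (hS : UniqueDiffOn ℝ S) (f : Sm S) (N : ℕ)
    (m : Fin (N + 1) → ℝ × ℝ) (g : Sm S)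
    (hg : ∀ z ∈ S, iteratedFDerivWithin ℝ N (f : ℝ × ℝ → ℝ) S z (Fin.tail m) = (g : ℝ × ℝ → ℝ) z)
    (z : ℝ × ℝ) (hz : z ∈ S) :
    iteratedFDerivWithin ℝ (N + 1) (f : ℝ × ℝ → ℝ) S z m = (D hS (m 0) g : ℝ × ℝ → ℝ) z := by
  rw [iteratedFDerivWithin_succ_apply_left, D_apply hS _ _ hz,
    ← fderivWithin_continuousMultilinear_apply_const_apply (hS z hz)
      ((f.2 : ContDiffOn ℝ (⊤ : ℕ∞) _ S).differentiableOn_iteratedFDerivWithin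
        (by exact_mod_cast ENat.natCast_lt_top N) hS z hz)]
  rw [fderivWithin_congr (f := (g : ℝ × ℝ → ℝ)) hg (hg z hz)]

lemma mpw_eq {S : Set (ℝ × ℝ)} (hS : UniqueDiffOn ℝ S) (f : Sm S) (a b : ℕ) (z : ℝ × ℝ)
    (hz : z ∈ S) :
    mpw S a b f z = (((D hS (1, 0)) ^ a * (D hS (0, 1)) ^ b) f : ℝ × ℝ → ℝ) z := by
  have key : ∀ a b N : ℕ, N = a + b → ∀ z ∈ S,
      iteratedFDerivWithin ℝ N (f : ℝ × ℝ → ℝ) S z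
        (fun i => if (i : ℕ) < a then ((1 : ℝ), (0 : ℝ)) else ((0 : ℝ), (1 : ℝ)))
      = (((D hS (1, 0)) ^ a * (D hS (0, 1)) ^ b) f : ℝ × ℝ → ℝ) z := by
    intro a
    induction a with
    | zero =>
      intro b
      induction b with
      | zero => rintro N rfl z hz; simp
      | succ b ih =>
        rintro N hN z hz
        obtain rfl : N = b + 1 := by omega
        rw [iter_step hS f b _ (((D hS (1, 0)) ^ 0 * (D hS (0, 1)) ^ b) f) (fun z hz => ?_) z hz]
        · simp [pow_succ']
        · rw [← ih b (by omega) z hz]; rfl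
    | succ a ih =>
      rintro b N hN z hz
      obtain rfl : N = (a + b) + 1 := by omega
      rw [iter_step hS f (a + b) _ (((D hS (1, 0)) ^ a * (D hS (0, 1)) ^ b) f) (fun z hz => ?_) z hz]
      · simp [pow_succ']
      · rw [← ih b _ rfl z hz]; congr 1; ext i <;> simp [Fin.tail]
  exact key a b _ rfl z hz

end LS
namespace LS

/-- weight -/
def w (k : ℕ) : ℝ := (Nat.factorial (k - 2) : ℝ)

lemma w_one (k : ℕ) : 1 ≤ w k := by
  unfold w; exact_mod_cast Nat.one_le_iff_ne_zero.2 (Nat.factorial_ne_zero _)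

lemma w_mul_le (j k : ℕ) : w j * w k ≤ w (j + k) := by
  unfold w
  have h1 : (j - 2).factorial * (k - 2).factorial ≤ ((j - 2) + (k - 2)).factorial :=
    Nat.le_of_dvd (Nat.factorial_pos _) (Nat.factorial_mul_factorial_dvd_factorial_add _ _)
  have h2 : ((j - 2) + (k - 2)).factorial ≤ (j + k - 2).factorial :=
    Nat.factorial_le (by omega)
  exact_mod_cast h1.trans h2

lemma w_upper (k : ℕ) : w k ≤ 5 * (k.factorial : ℝ) / ((k : ℝ) + 1) ^ 2 := by
  rw [le_div_iff₀ (by positivity)]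
  unfold w
  rcases k with _ | _ | k
  · norm_num
  · norm_num
  · simp only [Nat.factorial_succ]
    push_cast
    have : (0 : ℝ) < k.factorial := by exact_mod_cast Nat.factorial_pos k
    have hk : (0 : ℝ) ≤ k := by positivity
    have : (0:ℝ) ≤ k.factorial * (5 * ((k + 1 + 1) * (k + 1)) - (k + 1 + 1 + 1)^2) := by
      apply mul_nonneg this.le; nlinarith
    nlinarith

lemma w_lower (k : ℕ) : (k.factorial : ℝ) / ((k : ℝ) + 2) ^ 2 ≤ w k := by
  rw [div_le_iff₀ (by positivity)]
  unfold w
  rcases k with _ | _ | k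
  · norm_num
  · norm_num
  · simp only [Nat.factorial_succ]
    push_cast
    have : (0 : ℝ) < k.factorial := by exact_mod_cast Nat.factorial_pos k
    have hk : (0 : ℝ) ≤ k := by positivity
    have : (0:ℝ) ≤ k.factorial * ((k + 1 + 1 + 2)^2 - ((k + 1 + 1) * (k + 1))) := by
      apply mul_nonneg this.le; nlinarith
    nlinarith

lemma sum_inv (N : ℕ) : ∑ k ∈ Finset.range (N + 1), 1 / ((k : ℝ) + 1) ^ 2 ≤ 2 - 1 / ((N : ℝ) + 1) := by
  induction N with
  | zero => norm_num
  | succ N ih =>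
    rw [Finset.sum_range_succ]
    have : 1 / (((N + 1 : ℕ) : ℝ) + 1) ^ 2 ≤ 1 / ((N : ℝ) + 1) - 1 / (((N + 1 : ℕ) : ℝ) + 1) := by
      push_cast
      rw [div_sub_div _ _ (by positivity) (by positivity), div_le_div_iff₀ (by positivity) (by positivity)]
      have : (0:ℝ) ≤ N := by positivity
      nlinarith
    linarith

lemma w_conv (N : ℕ) : ∑ k ∈ Finset.range (N + 1), (N.choose k : ℝ) * (w k * w (N - k)) ≤ 200 * w N := by
  have h1 : ∀ k ∈ Finset.range (N + 1), (N.choose k : ℝ) * (w k * w (N - k)) ≤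
      50 * ((N.factorial : ℝ) / ((N : ℝ) + 2) ^ 2) *
        (1 / ((k : ℝ) + 1) ^ 2 + 1 / (((N - k : ℕ) : ℝ) + 1) ^ 2) := by
    intro k hk
    have hkN : k ≤ N := by have := Finset.mem_range.1 hk; omega
    have hf : (N.choose k : ℝ) * k.factorial * (N - k).factorial = N.factorial := by
      exact_mod_cast Nat.choose_mul_factorial_mul_factorial hkN
    have hx : (N : ℝ) + 2 = ((k : ℝ) + 1) + (((N - k : ℕ) : ℝ) + 1) := by
      rw [Nat.cast_sub hkN]; ring
    have hu := mul_le_mul (w_upper k) (w_upper (N - k)) (zero_le_one.trans (w_one _)) (by positivity)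
    refine (mul_le_mul_of_nonneg_left hu (by positivity)).trans ?_
    rw [← hf, hx]
    set x : ℝ := (k : ℝ) + 1
    set y : ℝ := ((N - k : ℕ) : ℝ) + 1
    have hxp : 0 < x := by positivity
    have hyp : 0 < y := by positivity
    have e1 : (N.choose k : ℝ) * (5 * (k.factorial : ℝ) / x ^ 2 * (5 * ((N - k).factorial : ℝ) / y ^ 2))
      = ((N.choose k : ℝ) * k.factorial * (N - k).factorial) * (25 / (x ^ 2 * y ^ 2)) := by
      field_simp; ring
    have e2 : 50 * ((N.choose k : ℝ) * k.factorial * (N - k).factorial / (x + y) ^ 2) * (1 / x ^ 2 + 1 / y ^ 2)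
      = ((N.choose k : ℝ) * k.factorial * (N - k).factorial) * (50 * (x ^ 2 + y ^ 2) / ((x + y) ^ 2 * (x ^ 2 * y ^ 2))) := by
      field_simp; ring
    rw [e1, e2]
    apply mul_le_mul_of_nonneg_left _ (by positivity)
    rw [div_le_div_iff₀ (by positivity) (by positivity)]
    have : 0 ≤ (x ^ 2 * y ^ 2) * (50 * (x ^ 2 + y ^ 2) - 25 * (x + y) ^ 2) := by
      apply mul_nonneg (by positivity); nlinarith [sq_nonneg (x - y)]
    nlinarith
  refine (Finset.sum_le_sum h1).trans ?_
  rw [← Finset.mul_sum, Finset.sum_add_distrib]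
  have h2 : ∑ k ∈ Finset.range (N + 1), 1 / (((N - k : ℕ) : ℝ) + 1) ^ 2
      = ∑ k ∈ Finset.range (N + 1), 1 / ((k : ℝ) + 1) ^ 2 := by
    have := Finset.sum_range_reflect (fun k : ℕ => 1 / ((k : ℝ) + 1) ^ 2) (N + 1)
    simpa using this
  rw [h2]
  have h3 := sum_inv N
  have h4 : (0:ℝ) ≤ 1 / ((N : ℝ) + 1) := by positivity
  have h5 := w_lower N
  have h6 : (0:ℝ) ≤ (N.factorial : ℝ) / ((N : ℝ) + 2) ^ 2 := by positivity
  nlinarith [mul_le_mul_of_nonneg_left (show ∑ k ∈ Finset.range (N + 1), 1 / ((k : ℝ) + 1) ^ 2 ≤ 2 by linarith) h6]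

lemma vander (a b : ℕ) (F : ℕ → ℝ) :
    ∑ p ∈ Finset.range (a + 1) ×ˢ Finset.range (b + 1), ((a.choose p.1 * b.choose p.2 : ℕ) : ℝ) * F (p.1 + p.2)
      = ∑ k ∈ Finset.range (a + b + 1), ((a + b).choose k : ℝ) * F k := by
  have h1 : ∀ k ∈ Finset.range (a + b + 1), ((a + b).choose k : ℝ) * F k =
      ∑ p ∈ (Finset.range (a + 1) ×ˢ Finset.range (b + 1)) with p.1 + p.2 = k,
        ((a.choose p.1 * b.choose p.2 : ℕ) : ℝ) * F (p.1 + p.2) := by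
    intro k _
    rw [Nat.add_choose_eq, Nat.cast_sum, Finset.sum_mul]
    symm
    have hsub : (Finset.range (a + 1) ×ˢ Finset.range (b + 1)).filter (fun p => p.1 + p.2 = k)
        ⊆ Finset.HasAntidiagonal.antidiagonal k := by
      intro p hp
      simpa using (Finset.mem_filter.1 hp).2
    rw [← Finset.sum_subset hsub]
    · apply Finset.sum_congr rfl
      intro p hp
      rw [(Finset.mem_filter.1 hp).2]
    · intro p hp hn
      have hp' : p.1 + p.2 = k := by simpa using hp
      by_cases h : p.1 < a + 1 ∧ p.2 < b + 1
      · exact absurd (by simp [h, hp']) hn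
      · have : a < p.1 ∨ b < p.2 := by omega
        rcases this with h | h <;> simp [Nat.choose_eq_zero_of_lt h]
  rw [Finset.sum_congr rfl h1]
  symm
  apply Finset.sum_fiberwise_of_maps_to
  intro p hp
  simp at hp ⊢
  omega

lemma w_conv_s (s : ℝ) (hs : 1 ≤ s) (a b : ℕ) :
    ∑ p ∈ Finset.range (a + 1) ×ˢ Finset.range (b + 1), ((a.choose p.1 * b.choose p.2 : ℕ) : ℝ)
      * (w (p.1 + p.2) ^ s * w (a + b - (p.1 + p.2)) ^ s) ≤ 200 * w (a + b) ^ s := by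
  rw [vander a b (fun k => w k ^ s * w (a + b - k) ^ s)]
  have hN : 0 < w (a + b) := lt_of_lt_of_le one_pos (w_one _)
  have h1 : ∀ k ∈ Finset.range (a + b + 1), ((a + b).choose k : ℝ) * (w k ^ s * w (a + b - k) ^ s) ≤
      (((a + b).choose k : ℝ) * (w k * w (a + b - k))) * (w (a + b) ^ s / w (a + b)) := by
    intro k hk
    have hk' : k + (a + b - k) = a + b := by have := Finset.mem_range.1 hk; omega
    rw [mul_assoc]
    apply mul_le_mul_of_nonneg_left _ (by positivity)
    have p1 := zero_le_one.trans (w_one k)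
    have p2 := zero_le_one.trans (w_one (a + b - k))
    have hle := w_mul_le k (a + b - k)
    rw [hk'] at hle
    rw [← Real.mul_rpow p1 p2]
    set r := w k * w (a + b - k)
    have hr : 0 ≤ r := mul_nonneg p1 p2
    have h2 : (r / w (a + b)) ^ s ≤ r / w (a + b) := by
      apply Real.rpow_le_self_of_le_one (by positivity) _ hs
      rw [div_le_one hN]; exact hle
    rw [Real.div_rpow hr hN.le, div_le_iff₀ (by positivity)] at h2
    calc _ ≤ _ := h2
      _ = _ := by ring
  refine (Finset.sum_le_sum h1).trans ?_
  rw [← Finset.sum_mul]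
  refine (mul_le_mul_of_nonneg_right (w_conv (a + b)) (by positivity)).trans (le_of_eq ?_)
  field_simp

set_option maxHeartbeats 1000000 in
lemma conv (s : ℝ) (hs : 1 ≤ s) (L₁ L₂ A B : ℝ) (h1 : 1 ≤ L₁) (h2 : 1 ≤ L₂) (hA : 0 ≤ A) (hB : 0 ≤ B)
    (a b : ℕ) (T : Finset (ℕ × ℕ)) (hT : T ⊆ Finset.range (a + 1) ×ˢ Finset.range (b + 1))
    (F G : ℕ → ℕ → ℝ) (hG0 : ∀ i j, 0 ≤ G i j) (e e' : ℕ → ℕ) (E : ℕ)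
    (hF : ∀ p ∈ T, F p.1 p.2 ≤ A * (L₁ ^ ((p.1 : ℤ) - e (p.1 + p.2)) * L₂ ^ p.2 * w (p.1 + p.2) ^ s))
    (hG : ∀ p ∈ T, G (a - p.1) (b - p.2) ≤ B * (L₁ ^ (((a - p.1 : ℕ) : ℤ) - e' (a + b - (p.1 + p.2)))
      * L₂ ^ (b - p.2) * w (a + b - (p.1 + p.2)) ^ s))
    (hE : ∀ p ∈ T, E ≤ e (p.1 + p.2) + e' (a + b - (p.1 + p.2))) :
    ∑ p ∈ T, ((a.choose p.1 * b.choose p.2 : ℕ) : ℝ) * F p.1 p.2 * G (a - p.1) (b - p.2)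
      ≤ A * B * 200 * (L₁ ^ ((a : ℤ) - E) * L₂ ^ b * w (a + b) ^ s) := by
  have wp : ∀ k, 0 < w k ^ s := fun k => Real.rpow_pos_of_pos (lt_of_lt_of_le one_pos (w_one _)) _
  have L1p : 0 < L₁ := by linarith
  have L2p : 0 < L₂ := by linarith
  have key : ∀ p ∈ T, ((a.choose p.1 * b.choose p.2 : ℕ) : ℝ) * F p.1 p.2 * G (a - p.1) (b - p.2) ≤
      (A * B * (L₁ ^ ((a : ℤ) - E) * L₂ ^ b)) * (((a.choose p.1 * b.choose p.2 : ℕ) : ℝ)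
      * (w (p.1 + p.2) ^ s * w (a + b - (p.1 + p.2)) ^ s)) := by
    intro p hp
    have hp2 := hT hp
    simp only [Finset.mem_product, Finset.mem_range] at hp2
    rw [mul_assoc]
    have hE' := hE p hp
    have w1 := wp (p.1 + p.2)
    have w2 := wp (a + b - (p.1 + p.2))
    have step := mul_le_mul (hF p hp) (hG p hp) (hG0 _ _) (by positivity)
    have hL : L₁ ^ ((p.1 : ℤ) - e (p.1 + p.2)) * L₁ ^ (((a - p.1 : ℕ) : ℤ) - e' (a + b - (p.1 + p.2)))
        ≤ L₁ ^ ((a : ℤ) - E) := by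
      rw [← zpow_add₀ L1p.ne']
      apply zpow_le_zpow_right₀ h1
      omega
    have hL2 : L₂ ^ p.2 * L₂ ^ (b - p.2) = L₂ ^ b := by
      rw [← pow_add]; congr 1; omega
    refine (mul_le_mul_of_nonneg_left step (by positivity)).trans ?_
    have : ((a.choose p.1 * b.choose p.2 : ℕ) : ℝ) * (A * (L₁ ^ ((p.1 : ℤ) - e (p.1 + p.2)) * L₂ ^ p.2 * w (p.1 + p.2) ^ s) *
        (B * (L₁ ^ (((a - p.1 : ℕ) : ℤ) - e' (a + b - (p.1 + p.2)))
      * L₂ ^ (b - p.2) * w (a + b - (p.1 + p.2)) ^ s))) =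
      (A * B * (((a.choose p.1 * b.choose p.2 : ℕ) : ℝ)
      * (w (p.1 + p.2) ^ s * w (a + b - (p.1 + p.2)) ^ s)) * L₂ ^ b) *
      (L₁ ^ ((p.1 : ℤ) - e (p.1 + p.2)) * L₁ ^ (((a - p.1 : ℕ) : ℤ) - e' (a + b - (p.1 + p.2)))) := by
      rw [← hL2]; ring
    rw [this]
    refine (mul_le_mul_of_nonneg_left hL (by positivity)).trans (le_of_eq (by ring))
  refine (Finset.sum_le_sum key).trans ?_
  rw [← Finset.mul_sum]
  have h3 := (Finset.sum_le_sum_of_subset_of_nonneg hT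
    (f := fun p => ((a.choose p.1 * b.choose p.2 : ℕ) : ℝ)
      * (w (p.1 + p.2) ^ s * w (a + b - (p.1 + p.2)) ^ s))
    (fun p _ _ => mul_nonneg (by positivity) (mul_nonneg (wp _).le (wp _).le))).trans (w_conv_s s hs a b)
  refine (mul_le_mul_of_nonneg_left h3 (by positivity)).trans (le_of_eq (by ring))

end LS
namespace LS

lemma supS_nonneg (p₀ : ℝ) (f : ℝ × ℝ → ℝ) : 0 ≤ supS p₀ f := by
  apply Real.sSup_nonneg
  rintro _ ⟨z, _, rfl⟩
  exact abs_nonneg _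

lemma le_supS {p₀ : ℝ} {f : ℝ × ℝ → ℝ} (hf : bddS p₀ f) {z : ℝ × ℝ} (hz : z ∈ Strip p₀) :
    |f z| ≤ supS p₀ f := le_csSup hf ⟨z, hz, rfl⟩

lemma supS_le {p₀ : ℝ} (hp : p₀ < 0) {f : ℝ × ℝ → ℝ} {C : ℝ} (h : ∀ z ∈ Strip p₀, |f z| ≤ C) :
    supS p₀ f ≤ C := by
  apply csSup_le
  · exact ⟨_, (0, 0), ⟨hp.le, le_rfl⟩, rfl⟩
  · rintro _ ⟨z, hz, rfl⟩
    exact h z hz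

lemma supS_congr {p₀ : ℝ} {f g : ℝ × ℝ → ℝ} (h : EqOn f g (Strip p₀)) : supS p₀ f = supS p₀ g := by
  unfold supS
  congr 1
  apply Set.image_congr
  intro z hz
  simp only [h hz]

lemma pd_congr {p₀ : ℝ} {f g : ℝ × ℝ → ℝ} (h : EqOn f g (Strip p₀)) (a b : ℕ) :
    EqOn (pd p₀ a b f) (pd p₀ a b g) (Strip p₀) := by
  intro z hz
  unfold pd mpw
  rw [iteratedFDerivWithin_congr h hz]

/-- combined derivative -/
def DD {p₀ : ℝ} (hp : p₀ < 0) (a b : ℕ) : Module.End ℝ (Sm (Strip p₀)) :=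
  (D (strip_unique p₀ hp) (1, 0)) ^ a * (D (strip_unique p₀ hp) (0, 1)) ^ b

lemma pd_eq {p₀ : ℝ} (hp : p₀ < 0) (f : Sm (Strip p₀)) (a b : ℕ) :
    EqOn (pd p₀ a b f) (DD hp a b f : ℝ × ℝ → ℝ) (Strip p₀) :=
  fun z hz => mpw_eq (strip_unique p₀ hp) f a b z hz

lemma DD_mul {p₀ : ℝ} (hp : p₀ < 0) (a b c d : ℕ) :
    DD hp a b * DD hp c d = DD hp (a + c) (b + d) := by
  unfold DD
  have hc := D_comm (strip_unique p₀ hp) (fun z hz => strip_closure p₀ hp hz) (1, 0) (0, 1)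
  have := (hc.pow_pow c b).eq
  rw [pow_add, pow_add, mul_assoc, ← mul_assoc (_ ^ b), ← this]
  simp only [mul_assoc]

lemma pd_pd {p₀ : ℝ} (hp : p₀ < 0) (f : Sm (Strip p₀)) (a b c d : ℕ) :
    EqOn (pd p₀ a b (pd p₀ c d f)) (pd p₀ (a + c) (b + d) f) (Strip p₀) := by
  intro z hz
  rw [pd_congr (pd_eq hp f c d) a b hz, pd_eq hp _ a b hz, pd_eq hp _ _ _ hz, ← DD_mul]
  rfl

lemma DD_leib {p₀ : ℝ} (hp : p₀ < 0) (f g : Sm (Strip p₀)) (a b : ℕ) :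
    DD hp a b (f * g) = ∑ p ∈ Finset.range (a + 1) ×ˢ Finset.range (b + 1),
      ((a.choose p.1 * b.choose p.2 : ℕ) : ℝ) • (DD hp p.1 p.2 f * DD hp (a - p.1) (b - p.2) g) := by
  unfold DD
  rw [Module.End.mul_apply, D_leib, map_sum, Finset.sum_product_right]
  apply Finset.sum_congr rfl
  intro j _
  rw [← nsmul_eq_mul, map_nsmul, D_leib, Finset.smul_sum]
  apply Finset.sum_congr rfl
  intro i _
  rw [← nsmul_eq_mul, Nat.cast_smul_eq_nsmul, smul_smul, mul_comm]
  rfl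

lemma sup_leib {p₀ : ℝ} (hp : p₀ < 0) (f : Sm (Strip p₀)) (hf : ∀ a b, bddS p₀ (pd p₀ a b f)) (a b : ℕ) :
    supS p₀ (pd p₀ a b (fun z => ((f : ℝ × ℝ → ℝ) z) ^ 2)) ≤
      ∑ p ∈ Finset.range (a + 1) ×ˢ Finset.range (b + 1),
      ((a.choose p.1 * b.choose p.2 : ℕ) : ℝ) * supS p₀ (pd p₀ p.1 p.2 f) *
        supS p₀ (pd p₀ (a - p.1) (b - p.2) f) := by
  apply supS_le hp
  intro z hz
  have h0 : (fun z => ((f : ℝ × ℝ → ℝ) z) ^ 2) = ((f * f : Sm (Strip p₀)) : ℝ × ℝ → ℝ) := by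
    ext z; simp [sq]
  rw [h0, pd_eq hp _ a b hz, DD_leib]
  simp only [AddSubmonoidClass.coe_finsetSum, Finset.sum_apply]
  refine (Finset.abs_sum_le_sum_abs _ _).trans (Finset.sum_le_sum ?_)
  intro p _
  have e1 := le_supS (hf p.1 p.2) hz
  have e2 := le_supS (hf (a - p.1) (b - p.2)) hz
  rw [pd_eq hp _ _ _ hz] at e1 e2
  change |((a.choose p.1 * b.choose p.2 : ℕ) : ℝ) * ((DD hp p.1 p.2 f : ℝ × ℝ → ℝ) z * (DD hp (a - p.1) (b - p.2) f : ℝ × ℝ → ℝ) z)| ≤ _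
  rw [abs_mul, abs_mul, Nat.abs_cast, mul_assoc]
  apply mul_le_mul_of_nonneg_left _ (Nat.cast_nonneg _)
  exact mul_le_mul e1 e2 (abs_nonneg _) (supS_nonneg _ _)

lemma le_cknorm (p₀ : ℝ) (k : ℕ) (f : ℝ × ℝ → ℝ) (a b : ℕ) (h : a + b ≤ k) :
    supS p₀ (pd p₀ a b f) ≤ cknorm p₀ k f := by
  unfold cknorm
  have h1 : supS p₀ (pd p₀ a b f) ≤ ∑ b ∈ Finset.range (k + 1 - a), supS p₀ (pd p₀ a b f) :=
    Finset.single_le_sum (f := fun b => supS p₀ (pd p₀ a b f)) (fun _ _ => supS_nonneg _ _)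
      (Finset.mem_range.2 (by omega))
  refine h1.trans ?_
  exact Finset.single_le_sum (f := fun a => ∑ b ∈ Finset.range (k + 1 - a), supS p₀ (pd p₀ a b f))
    (fun _ _ => Finset.sum_nonneg fun _ _ => supS_nonneg _ _) (Finset.mem_range.2 (by omega))

lemma one_le_LL {L₁ L₂ : ℝ} (h1 : 1 ≤ L₁) (h2 : L₁ ≤ L₂) (i j e : ℕ) (h : e ≤ i + j) :
    1 ≤ L₁ ^ ((i : ℤ) - e) * L₂ ^ j := by
  have h3 : L₁ ^ j ≤ L₂ ^ j := pow_le_pow_left₀ (by linarith) h2 j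
  have h4 : 0 ≤ L₁ ^ ((i : ℤ) - e) := zpow_nonneg (by linarith) _
  refine le_trans ?_ (mul_le_mul_of_nonneg_left h3 h4)
  rw [← zpow_natCast, ← zpow_add₀ (by linarith)]
  exact one_le_zpow₀ h1 (by omega)

lemma w_rpow_one {s : ℝ} (hs : 1 ≤ s) (k : ℕ) : 1 ≤ w k ^ s :=
  Real.one_le_rpow (w_one k) (by linarith)

lemma w_mono {j k : ℕ} (h : j ≤ k) : w j ≤ w k := by
  unfold w; exact_mod_cast Nat.factorial_le (by omega)

lemma low_bound {s L₁ L₂ K X : ℝ} (hs : 1 ≤ s) (h1 : 1 ≤ L₁) (h2 : L₁ ≤ L₂) (hX : X ≤ K) (hK : 1 ≤ K)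
    (i j e : ℕ) (h : e ≤ i + j) :
    X ≤ K * (L₁ ^ ((i : ℤ) - e) * L₂ ^ j * w (i + j) ^ s) := by
  have a1 := one_le_LL h1 h2 i j e h
  have a2 := w_rpow_one hs (i + j)
  have a3 : 1 ≤ L₁ ^ ((i : ℤ) - e) * L₂ ^ j * w (i + j) ^ s := one_le_mul_of_one_le_of_one_le a1 a2
  nlinarith

lemma hq_bound {p₀ s K L₁ L₂ : ℝ} (hp : p₀ < 0) (hs : 1 ≤ s) {m n : ℕ}
    (h1 : 1 ≤ L₁) (h2 : L₁ ≤ L₂) (h : Sm (Strip p₀)) (hK : cknorm p₀ 4 h ≤ K) (hK1 : 1 ≤ K)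
    (hI : IndBounds p₀ s L₁ L₂ m n h) (i j : ℕ) (hij : i + j ≤ m) :
    supS p₀ (pd p₀ i j (pd p₀ 1 0 h)) ≤
      K * (L₁ ^ ((i : ℤ) - (min (i + j) 2 : ℕ)) * L₂ ^ j * w (i + j) ^ s) := by
  rw [supS_congr (pd_pd hp h i j 1 0)]
  by_cases hl : i + j ≤ 2
  · exact low_bound hs h1 h2 ((le_cknorm p₀ 4 h _ _ (by omega)).trans hK) hK1 i j _ (min_le_left _ _)
  have hmin : min (i + j) 2 = 2 := by omega
  rw [hmin]
  have L1p : 0 < L₁ := by linarith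
  have L2p : 0 < L₂ := by linarith
  have wk : w (i + j - 1) ^ s ≤ w (i + j) ^ s :=
    Real.rpow_le_rpow (zero_le_one.trans (w_one _)) (w_mono (by omega)) (by linarith)
  have wp := w_rpow_one hs (i + j - 1)
  have wp' := w_rpow_one hs (i + j)
  suffices hmain : supS p₀ (pd p₀ (i + 1) (j + 0) h) ≤ L₁ ^ ((i : ℤ) - (2 : ℕ)) * L₂ ^ j * w (i + j) ^ s by
    refine hmain.trans (le_mul_of_one_le_left (by positivity) hK1)
  rcases i with _ | i
  · obtain ⟨j, rfl⟩ : ∃ j', j = j' + 1 := ⟨j - 1, by omega⟩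
    have b1 := hI.1 0 j (by omega) (by omega)
    have b2 := (le_cknorm p₀ 2 (pd p₀ 0 j h) 1 1 (by omega)).trans b1
    rw [supS_congr (pd_pd hp h 1 1 0 j)] at b2
    have e1 : pd p₀ (0 + 1) (j + 1 + 0) h = pd p₀ (1 + 0) (1 + j) h := by
      congr 1; omega
    rw [e1]
    refine b2.trans ?_
    have e2 : (Nat.factorial (0 + j - 2) : ℝ) = w (0 + (j + 1) - 1) := by
      unfold w; congr 2
    rw [e2]
    refine mul_le_mul ?_ wk (by positivity) (by positivity)
    have e3 : L₁ ^ (((0 : ℕ) : ℤ) - 1) = L₁ ^ (((0 : ℕ) : ℤ) - (2 : ℕ)) * L₁ := by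
      rw [← zpow_add_one₀ L1p.ne']; congr 1
    rw [e3, pow_succ, mul_assoc]
    apply mul_le_mul_of_nonneg_left _ (by positivity)
    rw [mul_comm]
    exact mul_le_mul_of_nonneg_left h2 (by positivity)
  · have b1 := hI.1 i j (by omega) (by omega)
    have b2 := (le_cknorm p₀ 2 (pd p₀ i j h) 2 0 (by omega)).trans b1
    rw [supS_congr (pd_pd hp h 2 0 i j)] at b2
    have e1 : pd p₀ (i + 1 + 1) (j + 0) h = pd p₀ (2 + i) (0 + j) h := by
      congr 1 <;> omega
    rw [e1]
    refine b2.trans ?_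
    have e2 : (Nat.factorial (i + j - 2) : ℝ) = w (i + 1 + j - 1) := by
      unfold w; congr 2; omega
    rw [e2]
    have e3 : ((i : ℤ) - 1) = (((i + 1 : ℕ) : ℤ) - (2 : ℕ)) := by push_cast; ring
    rw [e3]
    exact mul_le_mul_of_nonneg_left wk (by positivity)

lemma hpp_bound {p₀ s K L₁ L₂ : ℝ} (hp : p₀ < 0) (hs : 1 ≤ s) {m n : ℕ}
    (h1 : 1 ≤ L₁) (h2 : L₁ ≤ L₂) (h : Sm (Strip p₀)) (hK : cknorm p₀ 4 h ≤ K) (hK1 : 1 ≤ K)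
    (hI : IndBounds p₀ s L₁ L₂ m n h) (i j : ℕ) (hij : i + j ≤ m - 1) :
    supS p₀ (pd p₀ i j (pd p₀ 0 2 h)) ≤
      K * (L₁ ^ ((i : ℤ) - (min (i + j) 1 : ℕ)) * L₂ ^ j * w (i + j) ^ s) := by
  rw [supS_congr (pd_pd hp h i j 0 2)]
  by_cases hl : i + j ≤ 1
  · exact low_bound hs h1 h2 ((le_cknorm p₀ 4 h _ _ (by omega)).trans hK) hK1 i j _ (min_le_left _ _)
  have hmin : min (i + j) 1 = 1 := by omega
  rw [hmin]
  have L1p : 0 < L₁ := by linarith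
  have L2p : 0 < L₂ := by linarith
  have wp' := w_rpow_one hs (i + j)
  have b1 := hI.1 i j (by omega) (by omega)
  have b2 := (le_cknorm p₀ 2 (pd p₀ i j h) 0 2 (by omega)).trans b1
  rw [supS_congr (pd_pd hp h 0 2 i j)] at b2
  have e1 : pd p₀ (i + 0) (j + 2) h = pd p₀ (0 + i) (2 + j) h := by
    congr 1 <;> omega
  rw [e1]
  refine b2.trans ?_
  exact le_mul_of_one_le_left (by positivity) hK1

lemma sq_bound {p₀ s K L₁ L₂ : ℝ} (hp : p₀ < 0) (hs : 1 ≤ s) {m n : ℕ}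
    (h1 : 1 ≤ L₁) (h2 : L₁ ≤ L₂) (h : Sm (Strip p₀)) (hb : ∀ a b, bddS p₀ (pd p₀ a b h))
    (hK : cknorm p₀ 4 h ≤ K) (hK1 : 1 ≤ K)
    (hI : IndBounds p₀ s L₁ L₂ m n h) (i j : ℕ) (hij : i + j ≤ m) :
    supS p₀ (pd p₀ i j (fun z => (pd p₀ 1 0 h z) ^ 2)) ≤
      (K * K * 200) * (L₁ ^ ((i : ℤ) - (min (i + j) 2 : ℕ)) * L₂ ^ j * w (i + j) ^ s) := by
  set f : Sm (Strip p₀) := DD hp 1 0 h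
  have hf : EqOn (pd p₀ 1 0 h) (f : ℝ × ℝ → ℝ) (Strip p₀) := pd_eq hp h 1 0
  have hN : ∀ a b, supS p₀ (pd p₀ a b f) = supS p₀ (pd p₀ a b (pd p₀ 1 0 h)) := fun a b =>
    (supS_congr (pd_congr hf a b)).symm
  have hbf : ∀ a b, bddS p₀ (pd p₀ a b f) := by
    intro a b
    have e : (fun z => |pd p₀ a b f z|) '' Strip p₀ = (fun z => |pd p₀ (a + 1) (b + 0) h z|) '' Strip p₀ := by
      apply Set.image_congr
      intro z hz
      rw [← pd_congr hf a b hz, pd_pd hp h a b 1 0 hz]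
    unfold bddS
    rw [e]
    exact hb _ _
  have e1 : EqOn (fun z => (pd p₀ 1 0 h z) ^ 2) (fun z => ((f : ℝ × ℝ → ℝ) z) ^ 2) (Strip p₀) := by
    intro z hz
    simp only [hf hz]
  rw [supS_congr (pd_congr e1 i j)]
  refine (sup_leib hp f hbf i j).trans ?_
  refine conv s hs L₁ L₂ K K h1 (h1.trans h2) (by linarith) (by linarith) i j _ subset_rfl
    (fun a b => supS p₀ (pd p₀ a b f)) (fun a b => supS p₀ (pd p₀ a b f)) (fun _ _ => supS_nonneg _ _)
    (fun k => min k 2) (fun k => min k 2) _ ?_ ?_ ?_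
  · intro p hp'
    simp only [Finset.mem_product, Finset.mem_range] at hp'
    simp only [hN]
    exact hq_bound hp hs h1 h2 h hK hK1 hI _ _ (by omega)
  · intro p hp'
    simp only [Finset.mem_product, Finset.mem_range] at hp'
    simp only [hN]
    have e : i + j - (p.1 + p.2) = (i - p.1) + (j - p.2) := by omega
    rw [e]
    exact hq_bound hp hs h1 h2 h hK hK1 hI _ _ (by omega)
  · intro p hp'
    simp only [Finset.mem_product, Finset.mem_range] at hp'
    omega

end LS

/-- Lemma 4.1-type estimate: under the inductive Gevrey bounds, the Leibniz sum
`Σ_{γ≤α, γ≠0} C(α,γ) ‖∂^γ(h_q²)‖₀ ‖∂^{α−γ} h_{pp}‖₀` with `α = (m−n, n)` is bounded by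
`c₁ L₁^{α₁−2} L₂^{α₂} [(|α|−2)!]^s`, with `c₁` independent of `m, n, L₁, L₂`. -/
theorem leibniz_sum_hq_sq_hpp_bound (p₀ μ s K : ℝ) (hp₀ : p₀ < 0)
    (hμ : μ ∈ Set.Ioo (0 : ℝ) 1) (hs : 1 ≤ s) :
    ∃ c₁ : ℝ, 1 ≤ c₁ ∧ ∀ (m n : ℕ) (L₁ L₂ : ℝ) (h : ℝ × ℝ → ℝ),
      3 ≤ m → 1 ≤ n → n ≤ m → 1 ≤ L₁ → L₁ ≤ L₂ →
      ContDiffOn ℝ (⊤ : ℕ∞) h (Strip p₀) →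
      (∀ a b : ℕ, bddS p₀ (pd p₀ a b h)) →
      cknorm p₀ 4 h ≤ K → hnorm p₀ μ 2 (pd p₀ 1 0 h) ≤ K →
      IndBounds p₀ s L₁ L₂ m n h →
      ∑ γ ∈ ((Finset.range (m - n + 1)) ×ˢ (Finset.range (n + 1))).filter
            (fun γ => γ ≠ (0, 0)),
          ((Nat.choose (m - n) γ.1 * Nat.choose n γ.2 : ℕ) : ℝ)
            * supS p₀ (pd p₀ γ.1 γ.2 (fun z => (pd p₀ 1 0 h z) ^ 2))
            * supS p₀ (pd p₀ (m - n - γ.1) (n - γ.2) (pd p₀ 0 2 h))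
        ≤ c₁ * L₁ ^ ((m : ℤ) - (n : ℤ) - 2) * L₂ ^ n * (Nat.factorial (m - 2) : ℝ) ^ s := by
  set M : ℝ := max K 1 with hM
  have hM1 : 1 ≤ M := le_max_right _ _
  refine ⟨(M * M * 200) * M * 200, ?_, ?_⟩
  · have : 1 ≤ M * M := one_le_mul_of_one_le_of_one_le hM1 hM1
    have : 1 ≤ M * M * 200 * M := one_le_mul_of_one_le_of_one_le (by linarith) hM1
    linarith
  intro m n L₁ L₂ h hm hn hnm h1 h2 hsm hb hK _ hI
  have hK' : cknorm p₀ 4 h ≤ M := hK.trans (le_max_left _ _)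
  let g : LS.Sm (Strip p₀) := ⟨h, hsm⟩
  have key := LS.conv s hs L₁ L₂ (M * M * 200) M h1 (h1.trans h2) (by positivity) (by positivity)
    (m - n) n _ (Finset.filter_subset (fun γ => γ ≠ (0, 0))
      ((Finset.range (m - n + 1)) ×ˢ (Finset.range (n + 1))))
    (fun a b => supS p₀ (pd p₀ a b (fun z => (pd p₀ 1 0 h z) ^ 2)))
    (fun a b => supS p₀ (pd p₀ a b (pd p₀ 0 2 h))) (fun _ _ => LS.supS_nonneg _ _)
    (fun k => min k 2) (fun k => min k 1) 2 ?_ ?_ ?_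
  · refine key.trans (le_of_eq ?_)
    have e1 : m - n + n = m := by omega
    have e2 : (((m - n : ℕ) : ℤ) - (2 : ℕ)) = (m : ℤ) - (n : ℤ) - 2 := by omega
    rw [e1, e2]
    unfold LS.w
    ring
  · rintro ⟨a, b⟩ hp'
    simp only [Finset.mem_filter, Finset.mem_product, Finset.mem_range] at hp'
    exact LS.sq_bound hp₀ hs h1 h2 g hb hK' hM1 hI a b (by omega)
  · rintro ⟨a, b⟩ hp'
    simp only [Finset.mem_filter, Finset.mem_product, Finset.mem_range, ne_eq, Prod.mk.injEq] at hp'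
    have e : m - n + n - (a + b) = (m - n - a) + (n - b) := by omega
    simp only
    rw [e]
    exact LS.hpp_bound hp₀ hs h1 h2 g hK' hM1 hI _ _ (by omega)
  · rintro ⟨a, b⟩ hp'
    simp only [Finset.mem_filter, Finset.mem_product, Finset.mem_range, ne_eq, Prod.mk.injEq] at hp'
    simp only
    omega
end
end

section
/- Under the inductive Gevrey bounds on h, there is a constant c₂ ≥ 1 depending only on s and on finitely many low-order Hölder norms of h, but not on m, n, L₁, L₂, such that for α = (α₁,α₂) = (m−n, n): 2‖∂^α(h_p h_q h_{qp})‖₀ + ‖∂^α(h_p² h_{qq})‖₀ ≤ c₂ L₁^{α₁} L₂^{α₂−1} [(|α|−2)!]^s. -/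
open Set

noncomputable section

namespace MCT

abbrev Sm (p₀ : ℝ) (f : ℝ × ℝ → ℝ) : Prop := ContDiffOn ℝ (⊤ : ℕ∞) f (Strip p₀)

def D (p₀ : ℝ) (v : ℝ × ℝ) (f : ℝ × ℝ → ℝ) (z : ℝ × ℝ) : ℝ := fderivWithin ℝ f (Strip p₀) z v

lemma strip_convex (p₀ : ℝ) : Convex ℝ (Strip p₀) := by
  have : Strip p₀ = (LinearMap.snd ℝ ℝ ℝ) ⁻¹' (Set.Icc p₀ 0) := by
    ext z; simp [Strip]
  rw [this]
  exact (convex_Icc p₀ 0).linear_preimage _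

lemma strip_int {p₀ : ℝ} (hp : p₀ < 0) : (interior (Strip p₀)).Nonempty := by
  refine ⟨(0, p₀ / 2), ?_⟩
  rw [mem_interior]
  refine ⟨{z : ℝ × ℝ | p₀ < z.2 ∧ z.2 < 0}, ?_, ?_, ?_⟩
  · rintro z ⟨h1, h2⟩; exact ⟨h1.le, h2.le⟩
  · exact (isOpen_lt continuous_const continuous_snd).inter
      (isOpen_lt continuous_snd continuous_const)
  · constructor <;> simp <;> linarith

lemma strip_ud {p₀ : ℝ} (hp : p₀ < 0) : UniqueDiffOn ℝ (Strip p₀) :=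
  uniqueDiffOn_convex (strip_convex p₀) (strip_int hp)

lemma strip_ne {p₀ : ℝ} (hp : p₀ < 0) : (Strip p₀).Nonempty := ⟨(0,0), by simp [Strip, hp.le]⟩

lemma strip_cl {p₀ : ℝ} (hp : p₀ < 0) {z : ℝ × ℝ} (hz : z ∈ Strip p₀) :
    z ∈ closure (interior (Strip p₀)) := by
  rw [(strip_convex p₀).closure_interior_eq_closure_of_nonempty_interior (strip_int hp)]
  exact subset_closure hz

variable {p₀ : ℝ}

lemma Sm.diff {f : ℝ × ℝ → ℝ} (hf : Sm p₀ f) : DifferentiableOn ℝ f (Strip p₀) :=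
  ContDiffOn.differentiableOn hf (by simp)

lemma Sm.fd (hp : p₀ < 0) {f : ℝ × ℝ → ℝ} (hf : Sm p₀ f) :
    ContDiffOn ℝ (⊤ : ℕ∞) (fderivWithin ℝ f (Strip p₀)) (Strip p₀) :=
  ContDiffOn.fderivWithin hf (strip_ud hp) (by simp)

lemma Sm.D (hp : p₀ < 0) {f : ℝ × ℝ → ℝ} (hf : Sm p₀ f) (v : ℝ × ℝ) : Sm p₀ (D p₀ v f) :=
  (hf.fd hp).clm_apply contDiffOn_const

lemma D_congr {f g : ℝ × ℝ → ℝ} (h : EqOn f g (Strip p₀)) (v : ℝ × ℝ) :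
    EqOn (D p₀ v f) (D p₀ v g) (Strip p₀) := fun z hz => by
  unfold D; rw [fderivWithin_congr h (h hz)]

lemma D_mul (hp : p₀ < 0) {f g : ℝ × ℝ → ℝ} (hf : Sm p₀ f) (hg : Sm p₀ g) (v : ℝ × ℝ) :
    EqOn (D p₀ v (fun z => f z * g z)) (fun z => D p₀ v f z * g z + f z * D p₀ v g z)
      (Strip p₀) := fun z hz => by
  unfold D
  rw [fderivWithin_fun_mul (strip_ud hp z hz) (hf.diff z hz) (hg.diff z hz)]
  simp; ring

lemma D_sum (hp : p₀ < 0) {ι : Type*} (s : Finset ι) (c : ι → ℝ) (F : ι → ℝ × ℝ → ℝ)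
    (hF : ∀ i, Sm p₀ (F i)) (v : ℝ × ℝ) :
    EqOn (D p₀ v (fun z => ∑ i ∈ s, c i * F i z)) (fun z => ∑ i ∈ s, c i * D p₀ v (F i) z)
      (Strip p₀) := fun z hz => by
  unfold D
  rw [fderivWithin_fun_sum (strip_ud hp z hz)
    (fun i _ => ((hF i).diff z hz).const_mul (c i))]
  rw [_root_.sum_apply]
  refine Finset.sum_congr rfl fun i _ => ?_
  rw [fderivWithin_const_mul (strip_ud hp z hz) ((hF i).diff z hz)]
  simp

lemma D_comm (hp : p₀ < 0) {f : ℝ × ℝ → ℝ} (hf : Sm p₀ f) (v w : ℝ × ℝ) :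
    EqOn (D p₀ v (D p₀ w f)) (D p₀ w (D p₀ v f)) (Strip p₀) := fun z hz => by
  have key : ∀ v w, D p₀ v (D p₀ w f) z =
      fderivWithin ℝ (fderivWithin ℝ f (Strip p₀)) (Strip p₀) z v w := by
    intro v w
    unfold D
    rw [fderivWithin_clm_apply (strip_ud hp z hz)
      (((hf.fd hp).differentiableOn (by simp)) z hz) (differentiableWithinAt_const _)]
    simp
  rw [key, key]
  exact (hf z hz).isSymmSndFDerivWithinAt (by simp; exact WithTop.coe_le_coe.2 (le_top : (2 : ℕ∞) ≤ ⊤)) (strip_ud hp) (strip_cl hp hz) hz v w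

lemma Sm.mul {f g : ℝ × ℝ → ℝ} (hf : Sm p₀ f) (hg : Sm p₀ g) : Sm p₀ (fun z => f z * g z) :=
  ContDiffOn.mul hf hg

lemma pd_zero (f : ℝ × ℝ → ℝ) : pd p₀ 0 0 f = f := by
  funext z
  simp [pd, mpw]

lemma iter_succ (hp : p₀ < 0) {f : ℝ × ℝ → ℝ} (hf : Sm p₀ f) (N : ℕ) (w : ℕ → ℝ × ℝ) :
    EqOn (fun z => iteratedFDerivWithin ℝ (N + 1) f (Strip p₀) z (fun i => w i))
     (D p₀ (w 0) (fun z => iteratedFDerivWithin ℝ N f (Strip p₀) z (fun i => w (i + 1))))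
     (Strip p₀) := fun z hz => by
  unfold D
  rw [fderivWithin_continuousMultilinear_apply_const_apply (strip_ud hp z hz)
    ((ContDiffOn.differentiableOn_iteratedFDerivWithin hf
      (by exact_mod_cast WithTop.coe_lt_top N) (strip_ud hp)) z hz)]
  simp only [iteratedFDerivWithin_succ_apply_left]
  rfl

def wd (a : ℕ) (i : ℕ) : ℝ × ℝ := if i < a then ((1 : ℝ), (0 : ℝ)) else ((0 : ℝ), (1 : ℝ))

lemma pd_eq (a b N : ℕ) (h : N = a + b) (f : ℝ × ℝ → ℝ) :
    pd p₀ a b f = fun z => iteratedFDerivWithin ℝ N f (Strip p₀) z (fun i => wd a i) := by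
  subst h; rfl

lemma pd_succ_q (hp : p₀ < 0) {f : ℝ × ℝ → ℝ} (hf : Sm p₀ f) (a b : ℕ) :
    EqOn (pd p₀ (a + 1) b f) (D p₀ (1, 0) (pd p₀ a b f)) (Strip p₀) := by
  rw [pd_eq (a + 1) b (a + b + 1) (by ring), pd_eq a b (a + b) rfl]
  have := iter_succ hp hf (a + b) (wd (a + 1))
  simpa [wd] using this

lemma pd_succ_p0 (hp : p₀ < 0) {f : ℝ × ℝ → ℝ} (hf : Sm p₀ f) (b : ℕ) :
    EqOn (pd p₀ 0 (b + 1) f) (D p₀ (0, 1) (pd p₀ 0 b f)) (Strip p₀) := by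
  rw [pd_eq 0 (b + 1) (b + 1) (by ring), pd_eq 0 b b (by ring)]
  have := iter_succ hp hf b (wd 0)
  simpa [wd] using this

lemma Sm.pd (hp : p₀ < 0) {f : ℝ × ℝ → ℝ} (hf : Sm p₀ f) (a b : ℕ) : Sm p₀ (pd p₀ a b f) := by
  induction a with
  | zero =>
    induction b with
    | zero => rwa [pd_zero]
    | succ b ih => exact (ih.D hp (0, 1)).congr (pd_succ_p0 hp hf b)
  | succ a ih => exact (ih.D hp (1, 0)).congr (pd_succ_q hp hf a b)

lemma pd_succ_p (hp : p₀ < 0) {f : ℝ × ℝ → ℝ} (hf : Sm p₀ f) (a b : ℕ) :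
    EqOn (pd p₀ a (b + 1) f) (D p₀ (0, 1) (pd p₀ a b f)) (Strip p₀) := by
  induction a with
  | zero => exact pd_succ_p0 hp hf b
  | succ a ih =>
    exact (pd_succ_q hp hf a (b + 1)).trans <| (D_congr ih _).trans <|
      (D_comm hp (hf.pd hp a b) _ _).trans <| D_congr (pd_succ_q hp hf a b).symm _

lemma pd_pd (hp : p₀ < 0) {f : ℝ × ℝ → ℝ} (hf : Sm p₀ f) (a b c d : ℕ) :
    EqOn (pd p₀ a b (pd p₀ c d f)) (pd p₀ (a + c) (b + d) f) (Strip p₀) := by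
  have hcd := hf.pd hp c d
  induction a with
  | zero =>
    induction b with
    | zero => simp [pd_zero, EqOn]
    | succ b ih =>
      have e : b + 1 + d = b + d + 1 := by ring
      rw [e]
      exact (pd_succ_p hp hcd _ _).trans <| (D_congr ih _).trans (pd_succ_p hp hf _ _).symm
  | succ a ih =>
      have e : a + 1 + c = a + c + 1 := by ring
      rw [e]
      exact (pd_succ_q hp hcd _ _).trans <| (D_congr ih _).trans (pd_succ_q hp hf _ _).symm

open Finset in
lemma anti_succ (G : ℕ → ℕ → ℝ) (n : ℕ) :
    ∑ ij ∈ antidiagonal (n + 1), ((n + 1).choose ij.1 : ℝ) * G ij.1 ij.2 =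
    ∑ ij ∈ antidiagonal n, (n.choose ij.1 : ℝ) * (G (ij.1 + 1) ij.2 + G ij.1 (ij.2 + 1)) := by
  rw [sum_antidiagonal_choose_succ_mul, ← Finset.sum_add_distrib]
  refine Finset.sum_congr rfl fun ij h => ?_
  rw [HasAntidiagonal.mem_antidiagonal] at h
  rw [show n.choose ij.2 = n.choose ij.1 from by
    rw [← h]; exact (Nat.choose_symm_add).symm]
  ring

open Finset in
lemma leib (hp : p₀ < 0) {f g : ℝ × ℝ → ℝ} (hf : Sm p₀ f) (hg : Sm p₀ g) (a b : ℕ) :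
    EqOn (pd p₀ a b (fun z => f z * g z))
      (fun z => ∑ ij ∈ antidiagonal a, (a.choose ij.1 : ℝ) * ∑ kl ∈ antidiagonal b,
        (b.choose kl.1 : ℝ) * (pd p₀ ij.1 kl.1 f z * pd p₀ ij.2 kl.2 g z)) (Strip p₀) := by
  have hfg := hf.mul hg
  have hprod : ∀ i j k l, Sm p₀ (fun z => pd p₀ i k f z * pd p₀ j l g z) :=
    fun i j k l => (hf.pd hp i k).mul (hg.pd hp j l)
  induction a with
  | zero =>
    simp only [HasAntidiagonal.antidiagonal_zero, sum_singleton, Nat.choose_self, Nat.cast_one, one_mul]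
    induction b with
    | zero => intro z hz; simp [pd_zero]
    | succ b ih =>
      refine (pd_succ_p hp hfg _ _).trans <| (D_congr ih _).trans <|
        (D_sum hp _ _ _ (fun i => hprod _ _ _ _) _).trans ?_
      intro z hz
      simp only
      rw [anti_succ (fun k l => pd p₀ 0 k f z * pd p₀ 0 l g z)]
      refine Finset.sum_congr rfl fun i _ => ?_
      rw [D_mul hp (hf.pd hp _ _) (hg.pd hp _ _) _ hz]
      simp only
      rw [pd_succ_p hp hf _ _ hz, pd_succ_p hp hg _ _ hz]
  | succ a ih =>
    have hG : ∀ i j, Sm p₀ (fun z => ∑ kl ∈ antidiagonal b,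
        (b.choose kl.1 : ℝ) * (pd p₀ i kl.1 f z * pd p₀ j kl.2 g z)) := fun i j =>
      ContDiffOn.sum fun kl _ => contDiffOn_const.mul (hprod _ _ _ _)
    refine (pd_succ_q hp hfg _ _).trans <| (D_congr ih _).trans <|
        (D_sum hp _ _ _ (fun i => hG _ _) _).trans ?_
    intro z hz
    simp only
    rw [anti_succ (fun i j => ∑ kl ∈ antidiagonal b,
        (b.choose kl.1 : ℝ) * (pd p₀ i kl.1 f z * pd p₀ j kl.2 g z))]
    refine Finset.sum_congr rfl fun i _ => ?_
    rw [D_sum hp _ _ _ (fun i => hprod _ _ _ _) _ hz]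
    simp only
    rw [← sum_add_distrib]
    congr 1
    refine Finset.sum_congr rfl fun k _ => ?_
    rw [D_mul hp (hf.pd hp _ _) (hg.pd hp _ _) _ hz]
    simp only
    rw [pd_succ_q hp hf _ _ hz, pd_succ_q hp hg _ _ hz]
    ring

open Finset in
lemma vander (H : ℕ → ℕ → ℝ) (a b : ℕ) :
    ∑ ij ∈ antidiagonal a, (a.choose ij.1 : ℝ) * ∑ kl ∈ antidiagonal b,
        (b.choose kl.1 : ℝ) * H (ij.1 + kl.1) (ij.2 + kl.2) =
    ∑ x ∈ antidiagonal (a + b), ((a + b).choose x.1 : ℝ) * H x.1 x.2 := by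
  induction a generalizing H with
  | zero => simp
  | succ a ih =>
    rw [anti_succ (fun i j => ∑ kl ∈ antidiagonal b,
        (b.choose kl.1 : ℝ) * H (i + kl.1) (j + kl.2)), show a + 1 + b = a + b + 1 by ring,
      anti_succ, ← ih (fun x y => H (x + 1) y + H x (y + 1))]
    refine Finset.sum_congr rfl fun i _ => ?_
    rw [← sum_add_distrib]
    congr 1
    refine Finset.sum_congr rfl fun k _ => ?_
    rw [show i.1 + 1 + k.1 = i.1 + k.1 + 1 by ring, show i.2 + 1 + k.2 = i.2 + k.2 + 1 by ring]
    ring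

def ph (n : ℕ) : ℝ := ((n - 2).factorial : ℝ)

lemma ph_pos (n : ℕ) : 0 < ph n := by unfold ph; positivity

lemma ph_mul_le (i j : ℕ) : ph i * ph j ≤ ph (i + j) := by
  unfold ph
  have h1 := Nat.le_of_dvd (Nat.factorial_pos _) (Nat.factorial_mul_factorial_dvd_factorial_add (i-2) (j-2))
  have h2 : ((i - 2) + (j - 2)).factorial ≤ (i + j - 2).factorial := Nat.factorial_le (by omega)
  exact_mod_cast h1.trans h2

lemma ph_up (n : ℕ) : ph n * ((n : ℝ) + 1) ^ 2 ≤ 5 * (n.factorial : ℝ) := by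
  unfold ph
  match n with
  | 0 => norm_num
  | 1 => norm_num
  | k + 2 =>
    rw [show k + 2 - 2 = k by omega, Nat.factorial_succ, Nat.factorial_succ]
    push_cast
    have : (0 : ℝ) < k.factorial := by positivity
    have hk : (0 : ℝ) ≤ k := by positivity
    nlinarith [mul_nonneg this.le hk, mul_nonneg this.le (mul_nonneg hk hk)]

lemma ph_down (n : ℕ) : (n.factorial : ℝ) ≤ ph n * ((n : ℝ) + 1) ^ 2 := by
  unfold ph
  match n with
  | 0 => norm_num
  | 1 => norm_num
  | k + 2 =>
    rw [show k + 2 - 2 = k by omega, Nat.factorial_succ, Nat.factorial_succ]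
    push_cast
    have : (0 : ℝ) < k.factorial := by positivity
    have hk : (0 : ℝ) ≤ k := by positivity
    nlinarith [mul_nonneg this.le hk, mul_nonneg this.le (mul_nonneg hk hk)]

lemma term_bd (i j : ℕ) : ((i + j).choose i : ℝ) * (ph i * ph j) ≤
    50 * ph (i + j) * (1 / ((i : ℝ) + 1) ^ 2 + 1 / ((j : ℝ) + 1) ^ 2) := by
  have hc : ((i + j).choose i : ℝ) * (i.factorial * j.factorial) = ((i + j).factorial : ℝ) := by
    have := Nat.add_choose_mul_factorial_mul_factorial i j
    rw [← Nat.choose_symm_add] at this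
    rw [← mul_assoc]; exact_mod_cast this
  have hi : (0 : ℝ) ≤ i := by positivity
  have hj : (0 : ℝ) ≤ j := by positivity
  have h1 : ph i * ph j * (((i : ℝ) + 1) ^ 2 * ((j : ℝ) + 1) ^ 2) ≤
      25 * (i.factorial * j.factorial) := by
    have := mul_le_mul (ph_up i) (ph_up j) (by have := ph_pos j; positivity) (by positivity)
    linarith
  have h2 := ph_down (i + j)
  have h3 : ((i + j).choose i : ℝ) * (ph i * ph j) * (((i : ℝ) + 1) ^ 2 * ((j : ℝ) + 1) ^ 2) ≤
      25 * (ph (i + j) * (((i + j : ℕ) : ℝ) + 1) ^ 2) := by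
    have := mul_le_mul_of_nonneg_left h1 (Nat.cast_nonneg (α := ℝ) ((i + j).choose i))
    nlinarith
  have h4 : (((i + j : ℕ) : ℝ) + 1) ^ 2 ≤ 2 * (((i : ℝ) + 1) ^ 2 + ((j : ℝ) + 1) ^ 2) := by
    push_cast
    nlinarith [sq_nonneg ((i : ℝ) - j)]
  have h5 := mul_le_mul_of_nonneg_left h4 (ph_pos (i + j)).le
  have hP : 0 < ((i : ℝ) + 1) ^ 2 * ((j : ℝ) + 1) ^ 2 := by positivity
  have e : 50 * ph (i + j) * (1 / ((i : ℝ) + 1) ^ 2 + 1 / ((j : ℝ) + 1) ^ 2) =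
    50 * ph (i + j) * (((i : ℝ) + 1) ^ 2 + ((j : ℝ) + 1) ^ 2) /
      (((i : ℝ) + 1) ^ 2 * ((j : ℝ) + 1) ^ 2) := by
    field_simp; ring
  rw [e, le_div_iff₀ hP]
  linarith

lemma sum_sq (n : ℕ) : ∑ i ∈ Finset.range (n + 1), 1 / ((i : ℝ) + 1) ^ 2 ≤ 2 - 1 / ((n : ℝ) + 1) := by
  induction n with
  | zero => norm_num
  | succ n ih =>
    rw [Finset.sum_range_succ]
    have : 1 / (((n + 1 : ℕ) : ℝ) + 1) ^ 2 ≤ 1 / ((n : ℝ) + 1) - 1 / (((n + 1 : ℕ) : ℝ) + 1) := by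
      push_cast
      have hn : (0 : ℝ) ≤ n := by positivity
      rw [div_sub_div _ _ (by positivity) (by positivity), div_le_div_iff₀ (by positivity) (by positivity)]
      nlinarith
    linarith

open Finset in
lemma comb (s : ℝ) (hs : 1 ≤ s) (M : ℕ) :
    ∑ x ∈ antidiagonal M, (M.choose x.1 : ℝ) * (ph x.1 ^ s * ph x.2 ^ s) ≤ 200 * ph M ^ s := by
  have h1 : ∀ x ∈ antidiagonal M, (M.choose x.1 : ℝ) * (ph x.1 ^ s * ph x.2 ^ s) ≤
      ph M ^ s * (50 * (1 / ((x.1 : ℝ) + 1) ^ 2 + 1 / ((x.2 : ℝ) + 1) ^ 2)) := by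
    rintro ⟨i, j⟩ hx
    rw [HasAntidiagonal.mem_antidiagonal] at hx
    simp only at hx ⊢
    subst hx
    have hM := ph_pos (i + j)
    have hij : 0 < ph i * ph j := mul_pos (ph_pos i) (ph_pos j)
    set r := ph i * ph j / ph (i + j) with hr
    have hr0 : 0 < r := div_pos hij hM
    have hr1 : r ≤ 1 := (div_le_one hM).2 (ph_mul_le i j)
    have hrs : r ^ s ≤ r := by
      have := Real.rpow_le_rpow_of_exponent_ge hr0 hr1 hs
      rwa [Real.rpow_one] at this
    have e : ph i ^ s * ph j ^ s = ph (i + j) ^ s * r ^ s := by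
      rw [← Real.mul_rpow (ph_pos i).le (ph_pos j).le, ← Real.mul_rpow hM.le hr0.le, hr,
        mul_div_cancel₀ _ hM.ne']
    have hMs : 0 < ph (i + j) ^ s := Real.rpow_pos_of_pos hM s
    rw [e, mul_left_comm]
    refine mul_le_mul_of_nonneg_left ?_ hMs.le
    refine (mul_le_mul_of_nonneg_left hrs (Nat.cast_nonneg _)).trans ?_
    rw [hr, ← mul_div_assoc, div_le_iff₀ hM]
    have := term_bd i j
    linarith
  refine (sum_le_sum h1).trans ?_
  rw [← mul_sum, mul_comm]
  refine mul_le_mul_of_nonneg_right ?_ (Real.rpow_pos_of_pos (ph_pos M) s).le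
  rw [← mul_sum, sum_add_distrib]
  have e1 : ∑ x ∈ antidiagonal M, 1 / ((x.1 : ℝ) + 1) ^ 2 ≤ 2 := by
    rw [Finset.Nat.sum_antidiagonal_eq_sum_range_succ (fun i _ => 1 / ((i : ℝ) + 1) ^ 2)]
    have := sum_sq M
    have h : 0 < 1 / ((M : ℝ) + 1) := by positivity
    linarith
  have e2 : ∑ x ∈ antidiagonal M, 1 / ((x.2 : ℝ) + 1) ^ 2 =
      ∑ x ∈ antidiagonal M, 1 / ((x.1 : ℝ) + 1) ^ 2 := by
    rw [← Finset.Nat.sum_antidiagonal_swap]; rfl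
  rw [e2]; linarith

lemma pt_le {f : ℝ × ℝ → ℝ} (hb : bddS p₀ f) {z : ℝ × ℝ} (hz : z ∈ Strip p₀) :
    |f z| ≤ supS p₀ f := le_csSup hb ⟨z, hz, rfl⟩

lemma sup_nonneg (f : ℝ × ℝ → ℝ) : 0 ≤ supS p₀ f := by
  apply Real.sSup_nonneg
  rintro _ ⟨z, _, rfl⟩
  exact abs_nonneg _

lemma sup_le (hp : p₀ < 0) {f : ℝ × ℝ → ℝ} {C : ℝ} (h : ∀ z ∈ Strip p₀, |f z| ≤ C) :
    supS p₀ f ≤ C := by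
  apply csSup_le ((strip_ne hp).image _)
  rintro _ ⟨z, hz, rfl⟩
  exact h z hz

lemma ck_ge {f : ℝ × ℝ → ℝ} {k a b : ℕ} (hb : bddS p₀ (pd p₀ a b f)) (hab : a + b ≤ k)
    {z : ℝ × ℝ} (hz : z ∈ Strip p₀) : |pd p₀ a b f z| ≤ cknorm p₀ k f := by
  refine (pt_le hb hz).trans ?_
  unfold cknorm
  refine le_trans ?_ (Finset.single_le_sum (f := fun a => ∑ b ∈ Finset.range (k + 1 - a),
    supS p₀ (pd p₀ a b f)) (fun a _ => Finset.sum_nonneg fun b _ => sup_nonneg _)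
    (Finset.mem_range.2 (show a < k + 1 by omega)))
  exact Finset.single_le_sum (f := fun b => supS p₀ (pd p₀ a b f)) (fun b _ => sup_nonneg _)
    (Finset.mem_range.2 (show b < k + 1 - a by omega))

lemma ck_ge2 (hp : p₀ < 0) {h : ℝ × ℝ → ℝ} (hh : Sm p₀ h) (hb : ∀ a b, bddS p₀ (pd p₀ a b h))
    {A B g1 g2 : ℕ} (h1 : g1 ≤ A) (h2 : g2 ≤ B) (h3 : A + B ≤ g1 + g2 + 2)
    {z : ℝ × ℝ} (hz : z ∈ Strip p₀) : |pd p₀ A B h z| ≤ cknorm p₀ 2 (pd p₀ g1 g2 h) := by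
  obtain ⟨a, rfl⟩ := Nat.exists_eq_add_of_le' h1
  obtain ⟨b, rfl⟩ := Nat.exists_eq_add_of_le' h2
  have e := pd_pd hp hh a b g1 g2
  rw [← e hz]
  refine ck_ge ?_ (by omega) hz
  have := hb (a + g1) (b + g2)
  unfold bddS at this ⊢
  convert this using 1
  exact Set.image_congr fun z hz => by rw [e hz]

lemma zp_le {L : ℝ} (hL : 1 ≤ L) (z : ℤ) (k : ℕ) (h : z ≤ k) : L ^ z ≤ L ^ k := by
  rw [← zpow_natCast]
  exact zpow_le_zpow_right₀ hL h

/-- weight -/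
def W (L₁ L₂ s : ℝ) (a b : ℕ) : ℝ := L₁ ^ a * L₂ ^ (b - 1) * ph (a + b) ^ s

lemma ph_one_le (n : ℕ) : 1 ≤ ph n := by
  unfold ph; exact_mod_cast Nat.factorial_pos _

lemma ph_mono {i j : ℕ} (h : i ≤ j) : ph i ≤ ph j := by
  unfold ph; exact_mod_cast Nat.factorial_le (by omega)

lemma W_one_le {L₁ L₂ s : ℝ} (h1 : 1 ≤ L₁) (h2 : 1 ≤ L₂) (hs : 1 ≤ s) (a b : ℕ) :
    1 ≤ W L₁ L₂ s a b := by
  unfold W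
  exact one_le_mul_of_one_le_of_one_le
    (one_le_mul_of_one_le_of_one_le (one_le_pow₀ h1) (one_le_pow₀ h2))
    (Real.one_le_rpow (ph_one_le _) (by linarith))

lemma ind_W {L₁ L₂ s : ℝ} {m n : ℕ} {h : ℝ × ℝ → ℝ} (h1 : 1 ≤ L₁) (h2 : 1 ≤ L₂) (hs : 1 ≤ s)
    (hI : IndBounds p₀ s L₁ L₂ m n h) {g1 g2 a b : ℕ} (hg1 : g1 ≤ a + 1) (hg2 : g2 ≤ b - 1)
    (hg : g1 + g2 ≤ a + b) (h2g : 2 ≤ g1 + g2)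
    (hm : g1 + g2 ≤ m - 1 ∨ (g1 + g2 = m ∧ g2 < n)) :
    cknorm p₀ 2 (pd p₀ g1 g2 h) ≤ W L₁ L₂ s a b := by
  have h0 : cknorm p₀ 2 (pd p₀ g1 g2 h) ≤
      L₁ ^ ((g1 : ℤ) - 1) * L₂ ^ g2 * ph (g1 + g2) ^ s := by
    rcases hm with hm | ⟨hm, hn⟩
    · exact hI.1 g1 g2 h2g hm
    · have := hI.2 g2 hn
      subst hm
      rw [show g1 + g2 - g2 = g1 by omega] at this
      rw [show ((g1 : ℤ) - 1) = ((g1 + g2 : ℕ) : ℤ) - g2 - 1 by push_cast; ring]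
      exact this
  refine h0.trans ?_
  unfold W
  have p1 : (0 : ℝ) < L₁ := by linarith
  have p2 : (0 : ℝ) < L₂ := by linarith
  have := ph_pos (g1 + g2)
  have i1 := zp_le h1 ((g1 : ℤ) - 1) a (by omega)
  have i2 := pow_le_pow_right₀ h2 hg2
  have i3 := Real.rpow_le_rpow this.le (ph_mono hg) (by linarith : (0 : ℝ) ≤ s)
  have q := Real.rpow_nonneg this.le s
  gcongr

lemma base_W (hp : p₀ < 0) {L₁ L₂ s K : ℝ} {m n : ℕ} {h : ℝ × ℝ → ℝ} (h1 : 1 ≤ L₁) (h2 : 1 ≤ L₂)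
    (hs : 1 ≤ s) (hn : 1 ≤ n) (hnm : n ≤ m) (hh : Sm p₀ h)
    (hb : ∀ a b, bddS p₀ (pd p₀ a b h)) (hK : cknorm p₀ 4 h ≤ K)
    (hI : IndBounds p₀ s L₁ L₂ m n h) {c d : ℕ}
    (hcd : (c = 0 ∧ d = 1) ∨ (c = 1 ∧ d = 0) ∨ (c = 1 ∧ d = 1) ∨ (c = 2 ∧ d = 0)) :
    ∀ a b, a ≤ m - n → b ≤ n → ∀ z ∈ Strip p₀,
      |pd p₀ a b (pd p₀ c d h) z| ≤ max K 1 * W L₁ L₂ s a b := by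
  intro a b ha hbn z hz
  rw [pd_pd hp hh a b c d hz]
  have hW := W_one_le h1 h2 hs a b
  have hK1 : 1 ≤ max K 1 := le_max_right _ _
  by_cases hab : a + b ≤ 2
  · refine (ck_ge (k := 4) (hb _ _) (by omega) hz).trans (hK.trans ?_)
    refine (le_max_left K 1).trans ?_
    exact le_mul_of_one_le_right (by linarith) hW
  · refine le_trans ?_ (le_mul_of_one_le_left (by linarith) hK1)
    rcases Nat.eq_zero_or_pos b with rfl | hb0
    · exact (ck_ge2 hp hh hb (g1 := a) (g2 := 0) (by omega) (by omega) (by omega) hz).trans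
        (ind_W h1 h2 hs hI (by omega) (by omega) (by omega) (by omega) (by omega))
    · rcases Nat.eq_zero_or_pos c with rfl | hc0
      · exact (ck_ge2 hp hh hb (g1 := a) (g2 := b - 1) (by omega) (by omega) (by omega) hz).trans
          (ind_W h1 h2 hs hI (by omega) (by omega) (by omega) (by omega) (by omega))
      · exact (ck_ge2 hp hh hb (g1 := a + 1) (g2 := b - 1) (by omega) (by omega) (by omega) hz).trans
          (ind_W h1 h2 hs hI (by omega) (by omega) (by omega) (by omega) (by omega))

open Finset in
lemma mul_W (hp : p₀ < 0) {L₁ L₂ s : ℝ} (h1 : 1 ≤ L₁) (h2 : 1 ≤ L₂) (hs : 1 ≤ s)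
    {f g : ℝ × ℝ → ℝ} (hf : Sm p₀ f) (hg : Sm p₀ g) {A B : ℕ} {C E : ℝ} (hC : 0 ≤ C) (hE : 0 ≤ E)
    (bf : ∀ a b, a ≤ A → b ≤ B → ∀ z ∈ Strip p₀, |pd p₀ a b f z| ≤ C * W L₁ L₂ s a b)
    (bg : ∀ a b, a ≤ A → b ≤ B → ∀ z ∈ Strip p₀, |pd p₀ a b g z| ≤ E * W L₁ L₂ s a b) :
    ∀ a b, a ≤ A → b ≤ B → ∀ z ∈ Strip p₀,
      |pd p₀ a b (fun z => f z * g z) z| ≤ (200 * C * E) * W L₁ L₂ s a b := by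
  intro a b ha hb z hz
  rw [leib hp hf hg a b hz]
  have p1 : (0 : ℝ) < L₁ := by linarith
  have p2 : (0 : ℝ) < L₂ := by linarith
  have key : ∀ ij ∈ antidiagonal a, ∀ kl ∈ antidiagonal b,
      |pd p₀ ij.1 kl.1 f z * pd p₀ ij.2 kl.2 g z| ≤ (C * E * L₁ ^ a * L₂ ^ (b - 1)) *
        (ph (ij.1 + kl.1) ^ s * ph (ij.2 + kl.2) ^ s) := by
    rintro ⟨i, j⟩ hij ⟨k, l⟩ hkl
    rw [HasAntidiagonal.mem_antidiagonal] at hij hkl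
    simp only at hij hkl ⊢
    have q1 := Real.rpow_nonneg (ph_pos (i + k)).le s
    have q2 := Real.rpow_nonneg (ph_pos (j + l)).le s
    rw [abs_mul]
    have := mul_le_mul (bf i k (by omega) (by omega) z hz) (bg j l (by omega) (by omega) z hz)
      (abs_nonneg _) (by unfold W; positivity)
    refine this.trans ?_
    have e : C * W L₁ L₂ s i k * (E * W L₁ L₂ s j l) =
        (C * E * L₁ ^ a * L₂ ^ ((k - 1) + (l - 1))) * (ph (i + k) ^ s * ph (j + l) ^ s) := by
      unfold W
      rw [← hij, pow_add, pow_add]; ring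
    rw [e]
    have := pow_le_pow_right₀ h2 (show (k - 1) + (l - 1) ≤ b - 1 by omega)
    gcongr
  have hQ : 0 ≤ C * E * L₁ ^ a * L₂ ^ (b - 1) := by positivity
  calc _ ≤ ∑ ij ∈ antidiagonal a, (a.choose ij.1 : ℝ) * ∑ kl ∈ antidiagonal b,
        (b.choose kl.1 : ℝ) * ((C * E * L₁ ^ a * L₂ ^ (b - 1)) *
        (ph (ij.1 + kl.1) ^ s * ph (ij.2 + kl.2) ^ s)) := by
        refine (abs_sum_le_sum_abs _ _).trans (sum_le_sum fun ij hij => ?_)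
        rw [abs_mul, Nat.abs_cast]
        refine mul_le_mul_of_nonneg_left ?_ (Nat.cast_nonneg _)
        refine (abs_sum_le_sum_abs _ _).trans (sum_le_sum fun kl hkl => ?_)
        rw [abs_mul, Nat.abs_cast]
        exact mul_le_mul_of_nonneg_left (key ij hij kl hkl) (Nat.cast_nonneg _)
    _ = ∑ x ∈ antidiagonal (a + b), ((a + b).choose x.1 : ℝ) *
        ((C * E * L₁ ^ a * L₂ ^ (b - 1)) * (ph x.1 ^ s * ph x.2 ^ s)) :=
        vander (fun x y => (C * E * L₁ ^ a * L₂ ^ (b - 1)) * (ph x ^ s * ph y ^ s)) a b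
    _ = (C * E * L₁ ^ a * L₂ ^ (b - 1)) * ∑ x ∈ antidiagonal (a + b),
        ((a + b).choose x.1 : ℝ) * (ph x.1 ^ s * ph x.2 ^ s) := by
        rw [mul_sum]; exact sum_congr rfl fun x _ => by ring
    _ ≤ (C * E * L₁ ^ a * L₂ ^ (b - 1)) * (200 * ph (a + b) ^ s) :=
        mul_le_mul_of_nonneg_left (comb s hs _) hQ
    _ = _ := by unfold W; ring

end MCT

/-- Lemma 4.2-type estimate: under the inductive Gevrey bounds, with `α = (m−n, n)`,
`2‖∂^α(h_p h_q h_{qp})‖₀ + ‖∂^α(h_p² h_{qq})‖₀ ≤ c₂ L₁^{α₁} L₂^{α₂−1} [(|α|−2)!]^s`,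
with `c₂` independent of `m, n, L₁, L₂`. -/
theorem mixed_cubic_terms_bound (p₀ μ s K : ℝ) (hp₀ : p₀ < 0)
    (hμ : μ ∈ Set.Ioo (0 : ℝ) 1) (hs : 1 ≤ s) :
    ∃ c₂ : ℝ, 1 ≤ c₂ ∧ ∀ (m n : ℕ) (L₁ L₂ : ℝ) (h : ℝ × ℝ → ℝ),
      3 ≤ m → 1 ≤ n → n ≤ m → 1 ≤ L₁ → L₁ ≤ L₂ →
      ContDiffOn ℝ (⊤ : ℕ∞) h (Strip p₀) →
      (∀ a b : ℕ, bddS p₀ (pd p₀ a b h)) →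
      cknorm p₀ 4 h ≤ K → hnorm p₀ μ 2 (pd p₀ 1 0 h) ≤ K →
      IndBounds p₀ s L₁ L₂ m n h →
      2 * supS p₀ (pd p₀ (m - n) n
            (fun z => pd p₀ 0 1 h z * pd p₀ 1 0 h z * pd p₀ 1 1 h z))
        + supS p₀ (pd p₀ (m - n) n
            (fun z => (pd p₀ 0 1 h z) ^ 2 * pd p₀ 2 0 h z))
        ≤ c₂ * L₁ ^ ((m : ℤ) - (n : ℤ)) * L₂ ^ ((n : ℤ) - 1)
            * (Nat.factorial (m - 2) : ℝ) ^ s := by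
  have hM : 1 ≤ max K 1 := le_max_right _ _
  refine ⟨120000 * max K 1 ^ 3, by nlinarith [one_le_pow₀ (n := 3) hM], ?_⟩
  intro m n L₁ L₂ h hm hn hnm hL1 hL12 hh hb hK _ hI
  have hL2 : 1 ≤ L₂ := hL1.trans hL12
  have base := fun (c d : ℕ) => MCT.base_W hp₀ hL1 hL2 hs hn hnm hh hb hK hI (c := c) (d := d)
  have sm := fun (c d : ℕ) => MCT.Sm.pd hp₀ hh c d
  have hM0 : 0 ≤ max K 1 := by linarith
  have hM2 : 0 ≤ 200 * max K 1 * max K 1 := by positivity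
  have t1 := MCT.mul_W hp₀ hL1 hL2 hs (sm 0 1) (sm 1 0) hM0 hM0
    (base 0 1 (by simp)) (base 1 0 (by simp))
  have t2 := MCT.mul_W hp₀ hL1 hL2 hs ((sm 0 1).mul (sm 1 0)) (sm 1 1) hM2 hM0
    t1 (base 1 1 (by simp))
  have t3 := MCT.mul_W hp₀ hL1 hL2 hs (sm 0 1) (sm 0 1) hM0 hM0
    (base 0 1 (by simp)) (base 0 1 (by simp))
  have t4 := MCT.mul_W hp₀ hL1 hL2 hs ((sm 0 1).mul (sm 0 1)) (sm 2 0) hM2 hM0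
    t3 (base 2 0 (by simp))
  have u1 := MCT.sup_le hp₀ (t2 (m - n) n le_rfl le_rfl)
  have u2 := MCT.sup_le hp₀ (t4 (m - n) n le_rfl le_rfl)
  have hW : MCT.W L₁ L₂ s (m - n) n = L₁ ^ ((m : ℤ) - (n : ℤ)) * L₂ ^ ((n : ℤ) - 1)
            * (Nat.factorial (m - 2) : ℝ) ^ s := by
    unfold MCT.W MCT.ph
    rw [show m - n + n = m by omega, ← zpow_natCast, ← zpow_natCast,
      Nat.cast_sub hnm, Nat.cast_sub hn]
    simp
  simp only [pow_two]
  rw [mul_assoc, mul_assoc, ← mul_assoc (L₁ ^ _), ← hW]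
  refine (add_le_add (mul_le_mul_of_nonneg_left u1 (by norm_num)) u2).trans (le_of_eq ?_)
  ring
end
end
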